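/- Fix τ > L > 0 and set x_A = (τ, −L) and x_B = (τ, L) in two-dimensional Minkowski space, and let v ∈ [0, 1). Then x_A and Λ_v x_B are lightlike separated (Q(Λ_v x_B − x_A) = 0) if and only if v = 2Lτ/(τ² + L²); for every other v ∈ [0, 1) they are spacelike separated (Q(Λ_v x_B − x_A) < 0). In particular, for all v with 0 ≤ v < 2Lτ/(τ² + L²), the points x_A and Λ_v x_B are spacelike separated. -/

import Mathlib

/-- Minkowski quadratic form `Q(t, x) = t² − x²` on ℝ². -/
def Q (p : ℝ × ℝ) : ℝ := p.1 ^ 2 - p.2 ^ 2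

/-- Lorentz factor `γ = (1 − v²)^(−1/2)`. -/
noncomputable def lorentzGamma (v : ℝ) : ℝ := 1 / Real.sqrt (1 - v ^ 2)

/-- Lorentz boost with velocity `v`: `Λ_v(t, x) = (γ(t − vx), γ(x − vt))`. -/
noncomputable def boost (v : ℝ) (p : ℝ × ℝ) : ℝ × ℝ :=
  (lorentzGamma v * (p.1 - v * p.2), lorentzGamma v * (p.2 - v * p.1))

/-! The boost preserves `Q` and each half of the interior of the light cone, so `p = Λ_v x_B` and
`q = x_A` lie on the same branch of a hyperbola `Q = const > 0`. Then `p + q` is timelike and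
Minkowski-orthogonal to `p - q`, since their product is `Q p - Q q = 0`. A nonzero vector orthogonal
to a timelike one is spacelike, so the separation is spacelike unless `Λ_v x_B = x_A`, and the
proportionality of these two vectors determines `v`. -/

theorem Q_pos_iff {p : ℝ × ℝ} : 0 < Q p ↔ |p.2| < |p.1| := by
  rw [Q, sub_pos, sq_lt_sq]

theorem Q_neg_of_orthogonal {p q : ℝ × ℝ} (hp : 0 < Q p) (horth : p.1 * q.1 = p.2 * q.2)
    (hq : q ≠ 0) : Q q < 0 := by
  have hp1 : p.1 ≠ 0 := abs_pos.mp ((abs_nonneg p.2).trans_lt (Q_pos_iff.mp hp))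
  have hq2 : q.2 ≠ 0 := by
    intro h
    have hq1 : q.1 = 0 := by simpa [h, hp1] using horth
    exact hq (Prod.ext hq1 h)
  have hprod : p.1 ^ 2 * Q q = -(q.2 ^ 2 * Q p) := by
    simp only [Q]
    linear_combination (p.1 * q.1 + p.2 * q.2) * horth
  have hneg : p.1 ^ 2 * Q q < 0 := by
    rw [hprod, neg_lt_zero]
    positivity
  exact neg_of_mul_neg_right hneg (sq_nonneg p.1)

theorem Q_sub_neg_of_Q_eq {p q : ℝ × ℝ} (hpq : Q p = Q q) (hadd : 0 < Q (p + q)) (hne : p ≠ q) :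
    Q (p - q) < 0 := by
  refine Q_neg_of_orthogonal hadd ?_ (sub_ne_zero.mpr hne)
  simp only [Q] at hpq
  simp only [Prod.fst_add, Prod.snd_add, Prod.fst_sub, Prod.snd_sub]
  linear_combination hpq

theorem Q_add_pos {p q : ℝ × ℝ} (hp : 0 < Q p) (hq : 0 < Q q) (hfst : 0 ≤ p.1 * q.1) :
    0 < Q (p + q) := by
  have hsnd : p.2 * q.2 ≤ p.1 * q.1 :=
    calc p.2 * q.2 ≤ |p.2| * |q.2| := (le_abs_self _).trans_eq (abs_mul _ _)
      _ ≤ |p.1| * |q.1| :=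
        mul_le_mul (Q_pos_iff.mp hp).le (Q_pos_iff.mp hq).le (abs_nonneg _) (abs_nonneg _)
      _ = p.1 * q.1 := by rw [← abs_mul, abs_of_nonneg hfst]
  have hexpand : Q (p + q) = Q p + Q q + 2 * (p.1 * q.1 - p.2 * q.2) := by
    simp only [Q, Prod.fst_add, Prod.snd_add]
    ring
  linarith

theorem lorentzGamma_pos {v : ℝ} (hv : |v| < 1) : 0 < lorentzGamma v :=
  one_div_pos.mpr (Real.sqrt_pos.mpr (sub_pos.mpr ((sq_lt_one_iff_abs_lt_one v).mpr hv)))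

theorem lorentzGamma_sq_mul {v : ℝ} (hv : |v| < 1) : lorentzGamma v ^ 2 * (1 - v ^ 2) = 1 := by
  have hpos : 0 < 1 - v ^ 2 := sub_pos.mpr ((sq_lt_one_iff_abs_lt_one v).mpr hv)
  rw [lorentzGamma, div_pow, Real.sq_sqrt hpos.le, one_pow, one_div_mul_cancel hpos.ne']

theorem Q_boost {v : ℝ} (hv : |v| < 1) (p : ℝ × ℝ) : Q (boost v p) = Q p := by
  simp only [Q, boost]
  linear_combination (p.1 ^ 2 - p.2 ^ 2) * lorentzGamma_sq_mul hv

theorem fst_mul_boost_fst_pos {v : ℝ} (hv : |v| < 1) {p : ℝ × ℝ} (hp : 0 < Q p) :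
    0 < p.1 * (boost v p).1 := by
  have hlt : |v * p.2| < |p.1| :=
    calc |v * p.2| = |v| * |p.2| := abs_mul _ _
      _ ≤ |p.2| := mul_le_of_le_one_left (abs_nonneg _) hv.le
      _ < |p.1| := Q_pos_iff.mp hp
  have hpos : 0 < p.1 * (p.1 - v * p.2) := by
    linarith [sq_lt_sq.mpr hlt, sq_nonneg (p.1 - v * p.2)]
  calc 0 < lorentzGamma v * (p.1 * (p.1 - v * p.2)) := mul_pos (lorentzGamma_pos hv) hpos
    _ = p.1 * (boost v p).1 := by simp only [boost]; ring

theorem lorentzGamma_two_mul_div {τ L : ℝ} (h : |L| < |τ|) :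
    lorentzGamma (2 * L * τ / (τ ^ 2 + L ^ 2)) = (τ ^ 2 + L ^ 2) / (τ ^ 2 - L ^ 2) := by
  have hdiff : 0 < τ ^ 2 - L ^ 2 := sub_pos.mpr (sq_lt_sq.mpr h)
  have hsum : 0 < τ ^ 2 + L ^ 2 := by linarith [sq_nonneg L]
  have hsq : 1 - (2 * L * τ / (τ ^ 2 + L ^ 2)) ^ 2 = ((τ ^ 2 - L ^ 2) / (τ ^ 2 + L ^ 2)) ^ 2 := by
    field_simp
    ring
  rw [lorentzGamma, hsq, Real.sqrt_sq (div_pos hdiff hsum).le, one_div_div]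

theorem boost_eq_reflection_iff {τ L v : ℝ} (h : |L| < |τ|) (hv : |v| < 1) :
    boost v (τ, L) = (τ, -L) ↔ v = 2 * L * τ / (τ ^ 2 + L ^ 2) := by
  have hdiff : 0 < τ ^ 2 - L ^ 2 := sub_pos.mpr (sq_lt_sq.mpr h)
  have hsum : 0 < τ ^ 2 + L ^ 2 := by linarith [sq_nonneg L]
  constructor
  · intro hboost
    obtain ⟨hfst, hsnd⟩ := Prod.mk.inj hboost
    have hproportional : (τ - v * L) * -L = (L - v * τ) * τ := by
      refine mul_left_cancel₀ (lorentzGamma_pos hv).ne' ?_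
      linear_combination (-L) * hfst - τ * hsnd
    rw [eq_div_iff hsum.ne']
    linear_combination hproportional
  · rintro rfl
    simp only [boost, lorentzGamma_two_mul_div h, Prod.mk.injEq]
    constructor <;> field_simp <;> ring

theorem boosted_xB_separation_from_xA_general {τ L v : ℝ} (h : |L| < |τ|) (hv : |v| < 1) :
    (Q (boost v (τ, L) - (τ, -L)) = 0 ↔ v = 2 * L * τ / (τ ^ 2 + L ^ 2)) ∧
    (v ≠ 2 * L * τ / (τ ^ 2 + L ^ 2) → Q (boost v (τ, L) - (τ, -L)) < 0) := by
  have hB : 0 < Q (τ, L) := Q_pos_iff.mpr h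
  have hreflect : Q (τ, L) = Q (τ, -L) := by simp only [Q, neg_sq]
  have hQ : Q (boost v (τ, L)) = Q (τ, -L) := (Q_boost hv _).trans hreflect
  have hfst : 0 < (boost v (τ, L)).1 * τ := by
    rw [mul_comm]
    exact fst_mul_boost_fst_pos hv hB
  have hadd : 0 < Q (boost v (τ, L) + (τ, -L)) :=
    Q_add_pos (hB.trans_eq (Q_boost hv _).symm) (hB.trans_eq hreflect) hfst.le
  rw [ne_eq, ← boost_eq_reflection_iff h hv]
  have hspacelike := Q_sub_neg_of_Q_eq hQ hadd
  refine ⟨⟨fun hzero => ?_, fun heq => ?_⟩, hspacelike⟩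
  · by_contra hne
    exact (hspacelike hne).ne hzero
  · simp [heq, Q]

/-- With `x_A = (τ, −L)`, `x_B = (τ, L)` for `τ > L > 0` and `v ∈ [0, 1)`:
`x_A` and `Λ_v x_B` are lightlike separated iff `v = 2Lτ/(τ² + L²)`; for every
other `v ∈ [0, 1)` they are spacelike separated; in particular they are
spacelike separated whenever `0 ≤ v < 2Lτ/(τ² + L²)`. -/
theorem boosted_xB_separation_from_xA (τ L : ℝ) (hL : 0 < L) (hτL : L < τ)
    (v : ℝ) (hv : v ∈ Set.Ico (0 : ℝ) 1) :
    (Q (boost v (τ, L) - (τ, -L)) = 0 ↔ v = 2 * L * τ / (τ ^ 2 + L ^ 2)) ∧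
    (v ≠ 2 * L * τ / (τ ^ 2 + L ^ 2) → Q (boost v (τ, L) - (τ, -L)) < 0) ∧
    (v < 2 * L * τ / (τ ^ 2 + L ^ 2) → Q (boost v (τ, L) - (τ, -L)) < 0) := by
  have h := boosted_xB_separation_from_xA_general
    ((abs_of_pos hL).trans_lt (hτL.trans_le (le_abs_self τ)))
    ((abs_of_nonneg hv.1).trans_lt hv.2)
  exact ⟨h.1, h.2, fun hlt => h.2 hlt.ne⟩
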